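/- arXiv:1701.02580 — 4 statements merged into one kernel-verified Lean document; each statement's English description precedes it below -/
import Mathlib

section
/- For any complex numbers z1, z2, z4 and any z ∈ ℂ, the quantity N(z) = (z2-z)·(z4-z)·conj(z1-z)·conj(z4-z2) + (z1-z)·(z2-z)·conj(z4-z)·conj(z2-z1) + (z1-z)·(z4-z)·conj(z2-z)·conj(z1-z4) is purely imaginary, i.e. conj(N(z)) = -N(z). -/
open ComplexConjugate

/-!
In terms of `a = z1 - z`, `b = z2 - z` and `d = z4 - z`, the quantity `N(z)` is the in-circle
determinant with rows `(|w|², conj w, w)` for `w = a, b, d`. Conjugation interchanges its last two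
columns, hence changes its sign.
-/

section

variable {R : Type*} [CommRing R]

theorem map_det_of_map_eq_submatrix {n : Type*} [Fintype n] [DecidableEq n] (f : R →+* R)
    {M : Matrix n n R} {σ : Equiv.Perm n} (h : M.map f = M.submatrix id σ) :
    f M.det = Equiv.Perm.sign σ * M.det := by
  rw [RingHom.map_det, RingHom.mapMatrix_apply, h, Matrix.det_permute']

variable [StarRing R]

/-- The in-circle matrix of three points `v i`. Over `ℂ`, its determinant vanishes exactly when some
circle or line through the origin contains all three points. -/
def inCircleMatrix (v : Fin 3 → R) : Matrix (Fin 3) (Fin 3) R :=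
  Matrix.of fun i => ![v i * conj (v i), conj (v i), v i]

theorem inCircleMatrix_map_conj (v : Fin 3 → R) :
    (inCircleMatrix v).map conj = (inCircleMatrix v).submatrix id (Equiv.swap 1 2) := by
  ext i j
  fin_cases j
  · simp [inCircleMatrix, Equiv.swap_apply_of_ne_of_ne, mul_comm]
  · simp [inCircleMatrix]
  · simp [inCircleMatrix]

theorem conj_det_inCircleMatrix (v : Fin 3 → R) :
    conj (inCircleMatrix v).det = -(inCircleMatrix v).det := by
  simpa using map_det_of_map_eq_submatrix conj (inCircleMatrix_map_conj v)

theorem det_inCircleMatrix (a b d : R) :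
    (inCircleMatrix ![a, b, d]).det =
      b * d * conj a * conj (d - b) + a * b * conj d * conj (b - a)
        + a * d * conj b * conj (a - d) := by
  simp only [inCircleMatrix, Matrix.det_fin_three, Matrix.of_apply, Matrix.cons_val, map_sub]
  ring

theorem N_purely_imaginary_general (z1 z2 z4 z : R) :
    conj ((z2 - z) * (z4 - z) * conj (z1 - z) * conj (z4 - z2)
        + (z1 - z) * (z2 - z) * conj (z4 - z) * conj (z2 - z1)
        + (z1 - z) * (z4 - z) * conj (z2 - z) * conj (z1 - z4))
    = -((z2 - z) * (z4 - z) * conj (z1 - z) * conj (z4 - z2)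
        + (z1 - z) * (z2 - z) * conj (z4 - z) * conj (z2 - z1)
        + (z1 - z) * (z4 - z) * conj (z2 - z) * conj (z1 - z4)) := by
  simpa only [det_inCircleMatrix, sub_sub_sub_cancel_right] using
    conj_det_inCircleMatrix ![z1 - z, z2 - z, z4 - z]

end

/-- the quantity `N(z)` is purely imaginary: `conj (N z) = - N z`. -/
theorem N_purely_imaginary (z1 z2 z4 : ℂ) (z : ℂ) :
    conj ((z2 - z) * (z4 - z) * conj (z1 - z) * conj (z4 - z2)
        + (z1 - z) * (z2 - z) * conj (z4 - z) * conj (z2 - z1)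
        + (z1 - z) * (z4 - z) * conj (z2 - z) * conj (z1 - z4))
    = -((z2 - z) * (z4 - z) * conj (z1 - z) * conj (z4 - z2)
        + (z1 - z) * (z2 - z) * conj (z4 - z) * conj (z2 - z1)
        + (z1 - z) * (z4 - z) * conj (z2 - z) * conj (z1 - z4)) :=
  N_purely_imaginary_general z1 z2 z4 z
end

section
/- Let V be a real vector space and let a12, a14, a23, a34, a24 and b12, b13, b14, b23, b34 be linear forms on V satisfying the four vertex relations (as identities of linear forms): a12 + a14 = b12 + b13 + b14; a12 + a23 + a24 = b12 + b23; a23 + a34 = b13 + b23 + b34; and a14 + a34 + a24 = b14 + b34. Then for any real numbers t12, t14, t23, t34, the following identity of linear forms holds: (t14 + t23 - t12 - t34)·(a12 - b12) + (t14 + t23)·a24 = (1/2)·[ (t12 + t34)·(b12 - a12 + b34 - a34) + (t14 + t23)·(b14 - a14 + b23 - a23) ]. -/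
/-!
Put `xᵢⱼ = bᵢⱼ - aᵢⱼ` for the four sides of the quadrilateral. At the vertices `1, 3` the two
sides meeting there have the same sum `x₁₂ + x₁₄ = x₂₃ + x₃₄ = -b₁₃`, and at `2, 4` likewise
`x₁₂ + x₂₃ = x₁₄ + x₃₄ = a₂₄`. Adding the two equations gives `2 x₁₂ = 2 x₃₄`, so opposite
sides agree.
Eliminating `a₂₄` turns the discontinuity into `(t₁₂ + t₃₄) x₁₂ + (t₁₄ + t₂₃) x₂₃`, and the
symmetric form is the average of this over each pair of opposite sides.
-/

theorem opposite_eq_of_adjacent_sums_eq {A : Type*} [AddCancelCommMonoid A]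
    (two_regular : IsSMulRegular A (2 : ℕ)) {x12 x23 x34 x14 : A}
    (h13 : x12 + x14 = x23 + x34) (h24 : x12 + x23 = x14 + x34) : x12 = x34 := by
  refine two_regular (add_right_cancel (b := x14 + x23) ?_)
  calc 2 • x12 + (x14 + x23) = (x12 + x14) + (x12 + x23) := by abel
    _ = (x23 + x34) + (x14 + x34) := by rw [h13, h24]
    _ = 2 • x34 + (x14 + x23) := by abel

section Semiring

variable {R M : Type*} [Semiring R] [AddCommMonoid M] [Module R M]

theorem isSMulRegular_nat_of_isUnit_natCast {n : ℕ} (hn : IsUnit (n : R)) : IsSMulRegular M n := by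
  intro x y hxy
  refine hn.isSMulRegular M ?_
  simpa only [Nat.cast_smul_eq_nsmul] using hxy

theorem smul_add_smul_eq_invOf_two_smul [Invertible (2 : R)] {x12 x23 x34 x14 : M}
    (h12 : x12 = x34) (h23 : x23 = x14) (s t : R) :
    s • x12 + t • x23 = ⅟(2 : R) • (s • (x12 + x34) + t • (x14 + x23)) := by
  rw [eq_comm, invOf_smul_eq_iff, ← h12, ← h23, two_smul, smul_add, smul_add]
  abel

end Semiring

section Ring

variable {R M : Type*} [Ring R] [AddCommGroup M] [Module R M]

theorem flip_discontinuity_eq_smul_add_smul {a12 a23 a24 b12 b23 : M}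
    (h : a12 + a23 + a24 = b12 + b23) (s t : R) :
    (t - s) • (a12 - b12) + t • a24 = s • (b12 - a12) + t • (b23 - a23) := by
  have a24_eq : a24 = (b12 - a12) + (b23 - a23) := by
    linear_combination (norm := module) h
  rw [a24_eq, smul_add, sub_smul, ← neg_sub b12 a12, smul_neg, smul_neg]
  abel

theorem flip_discontinuity_symmetric_form_general [Invertible (2 : R)]
    {a12 a14 a23 a34 a24 b12 b13 b14 b23 b34 : M}
    (h1 : a12 + a14 = b12 + b13 + b14)
    (h2 : a12 + a23 + a24 = b12 + b23)
    (h3 : a23 + a34 = b13 + b23 + b34)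
    (h4 : a14 + a34 + a24 = b14 + b34)
    (t12 t14 t23 t34 : R) :
    (t14 + t23 - t12 - t34) • (a12 - b12) + (t14 + t23) • a24
      = ⅟(2 : R) • ((t12 + t34) • (b12 - a12 + b34 - a34)
          + (t14 + t23) • (b14 - a14 + b23 - a23)) := by
  have two_regular : IsSMulRegular M (2 : ℕ) :=
    isSMulRegular_nat_of_isUnit_natCast (R := R) (isUnit_of_invertible (2 : R))
  have h13 : (b12 - a12) + (b14 - a14) = (b23 - a23) + (b34 - a34) := by
    linear_combination (norm := module) h3 - h1
  have h24 : (b12 - a12) + (b23 - a23) = (b14 - a14) + (b34 - a34) := by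
    linear_combination (norm := module) h4 - h2
  have h12_34 : b12 - a12 = b34 - a34 := opposite_eq_of_adjacent_sums_eq two_regular h13 h24
  have h23_14 : b23 - a23 = b14 - a14 := by rwa [h12_34, add_comm, add_left_inj] at h24
  rw [sub_sub, flip_discontinuity_eq_smul_add_smul h2,
    smul_add_smul_eq_invOf_two_smul h12_34 h23_14, add_sub_assoc, add_sub_assoc]

end Ring

/-- the dihedrally symmetric rewriting of the discontinuity `u - u'` of the
U(1) connection at a flip, as an identity of linear forms on a real vector space. -/
theorem flip_discontinuity_symmetric_form
    (V : Type*) [AddCommGroup V] [Module ℝ V]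
    (a12 a14 a23 a34 a24 b12 b13 b14 b23 b34 : V →ₗ[ℝ] ℝ)
    (h1 : a12 + a14 = b12 + b13 + b14)
    (h2 : a12 + a23 + a24 = b12 + b23)
    (h3 : a23 + a34 = b13 + b23 + b34)
    (h4 : a14 + a34 + a24 = b14 + b34)
    (t12 t14 t23 t34 : ℝ) :
    (t14 + t23 - t12 - t34) • (a12 - b12) + (t14 + t23) • a24
      = (1 / 2 : ℝ) • ((t12 + t34) • (b12 - a12 + b34 - a34)
          + (t14 + t23) • (b14 - a14 + b23 - a23)) := by
  simpa only [invOf_eq_inv, one_div] using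
    flip_discontinuity_symmetric_form_general h1 h2 h3 h4 t12 t14 t23 t34
end

section
/- Let z1, z2, z3 be pairwise distinct complex numbers. For u = (u1,u2,u3) ∈ ℂ³ set w_{ij}(u) = (u_j - u_i)/(z_j - z_i). Then for all u, u' ∈ ℂ³: Σ_{cyc} [ Im w_{12}(u)·Im w_{23}(u') - Im w_{12}(u')·Im w_{23}(u) ] = Σ_{cyc} [ Re w_{12}(u)·Re w_{23}(u') - Re w_{12}(u')·Re w_{23}(u) ], where Σ_{cyc} denotes the sum over the cyclic permutations (1,2,3) → (2,3,1) → (3,1,2) of the indices. In other words, the 2-forms ω_angle = (1/4)(dϑ12∧dϑ23 + dϑ23∧dϑ31 + dϑ31∧dϑ12) and ω_length = (1/4)(dλ12∧dλ23 + dλ23∧dλ31 + dλ31∧dλ12) are equal. -/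
open ComplexConjugate

/-- Value on the tangent vector with components `ui, uj` of the complex 1-form
`d log (z_j - z_i)` : `w_{ij}(u) = (u_j - u_i)/(z_j - z_i)`. -/
noncomputable def wform (zi zj ui uj : ℂ) : ℂ := (uj - ui) / (zj - zi)

/-!
The complex forms `ω_{ij} = d log (z_j - z_i)` satisfy Arnold's relation
`ω₁₂ ∧ ω₂₃ + ω₂₃ ∧ ω₃₁ + ω₃₁ ∧ ω₁₂ = 0`: since the differences `z_j - z_i` around the triangle sum
to zero, the three wedge products of their differentials coincide, and the coefficients
`(z_j - z_i)⁻¹ (z_k - z_j)⁻¹` sum to zero. Writing `ω_{ij} = dλ_{ij} + i dϑ_{ij}`, the real part of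
this relation is the equality of the length form and the angle form.
-/

section Wedge

variable {V R K : Type*}

/-- The wedge product of two 1-forms, as a function of a pair of tangent vectors. A 1-form is
encoded by its underlying function. -/
def wedge [Mul R] [Sub R] (α β : V → R) (u v : V) : R :=
  α u * β v - α v * β u

theorem wedge_smul_smul [CommRing R] (a b : R) (α β : V → R) :
    wedge (a • α) (b • β) = (a * b) • wedge α β := by
  ext u v
  simp only [wedge, Pi.smul_apply, smul_eq_mul]
  ring

theorem wedge_eq_wedge_of_add_eq_zero [CommRing R] {α β γ : V → R} (h : α + β + γ = 0) :
    wedge α β = wedge β γ := by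
  obtain rfl : γ = -(α + β) := (neg_eq_of_add_eq_zero_right h).symm
  ext u v
  simp only [wedge, Pi.neg_apply, Pi.add_apply]
  ring

theorem inv_mul_inv_add_cyclic_eq_zero [Field K] {a b c : K} (ha : a ≠ 0) (hb : b ≠ 0) (hc : c ≠ 0)
    (h : a + b + c = 0) : a⁻¹ * b⁻¹ + b⁻¹ * c⁻¹ + c⁻¹ * a⁻¹ = 0 := by
  field_simp
  linear_combination h

theorem wedge_inv_smul_add_cyclic_eq_zero [Field K] {a b c : K} {α β γ : V → K}
    (ha : a ≠ 0) (hb : b ≠ 0) (hc : c ≠ 0) (habc : a + b + c = 0) (hαβγ : α + β + γ = 0) :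
    wedge (a⁻¹ • α) (b⁻¹ • β) + wedge (b⁻¹ • β) (c⁻¹ • γ) + wedge (c⁻¹ • γ) (a⁻¹ • α) = 0 := by
  have hβγ : wedge β γ = wedge α β := (wedge_eq_wedge_of_add_eq_zero hαβγ).symm
  have hγα : wedge γ α = wedge α β :=
    wedge_eq_wedge_of_add_eq_zero (by rwa [← add_rotate] at hαβγ)
  calc
    _ = (a⁻¹ * b⁻¹ + b⁻¹ * c⁻¹ + c⁻¹ * a⁻¹) • wedge α β := by
      rw [wedge_smul_smul, wedge_smul_smul, wedge_smul_smul, hβγ, hγα, add_smul, add_smul]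
    _ = 0 := by rw [inv_mul_inv_add_cyclic_eq_zero ha hb hc habc, zero_smul]

open Complex in
theorem re_wedge (α β : V → ℂ) (u v : V) :
    (wedge α β u v).re = wedge (re ∘ α) (re ∘ β) u v - wedge (im ∘ α) (im ∘ β) u v := by
  simp only [wedge, Function.comp_apply, sub_re, mul_re]
  ring

open Complex in
theorem wedge_im_add_cyclic_eq_wedge_re_add_cyclic {α β γ : V → ℂ}
    (h : wedge α β + wedge β γ + wedge γ α = 0) :
    wedge (im ∘ α) (im ∘ β) + wedge (im ∘ β) (im ∘ γ) + wedge (im ∘ γ) (im ∘ α) =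
      wedge (re ∘ α) (re ∘ β) + wedge (re ∘ β) (re ∘ γ) + wedge (re ∘ γ) (re ∘ α) := by
  ext u v
  have h_re := congrArg re (congrFun₂ h u v)
  simp only [Pi.add_apply, Pi.zero_apply, add_re, zero_re, re_wedge] at h_re ⊢
  linarith

end Wedge

section Arnold

variable {ι K : Type*} [Field K]

/-- The 1-form `d log (z_j - z_i)` at the configuration `z`, as a function of the tangent vector.
Over `ℂ` its value on `u` is `wform (z i) (z j) (u i) (u j)`. -/
def dlogSub (z : ι → K) (i j : ι) (u : ι → K) : K :=
  (u j - u i) / (z j - z i)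

theorem dlogSub_eq_inv_smul (z : ι → K) (i j : ι) :
    dlogSub z i j = (z j - z i)⁻¹ • fun u : ι → K ↦ u j - u i :=
  funext fun _ ↦ div_eq_inv_mul _ _

theorem arnold_relation {z : ι → K} {i j k : ι} (hij : z i ≠ z j) (hjk : z j ≠ z k)
    (hki : z k ≠ z i) :
    wedge (dlogSub z i j) (dlogSub z j k) + wedge (dlogSub z j k) (dlogSub z k i) +
      wedge (dlogSub z k i) (dlogSub z i j) = 0 := by
  have cyclic_sum (u : ι → K) : (u j - u i) + (u k - u j) + (u i - u k) = 0 := by ring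
  simp only [dlogSub_eq_inv_smul]
  exact wedge_inv_smul_add_cyclic_eq_zero (sub_ne_zero.mpr hij.symm) (sub_ne_zero.mpr hjk.symm)
    (sub_ne_zero.mpr hki.symm) (cyclic_sum z) (funext cyclic_sum)

end Arnold

/-- `ω_angle = ω_length` for a face: the cyclic sum of products of
imaginary parts equals the cyclic sum of products of real parts. -/
theorem angle_form_eq_length_form (z1 z2 z3 : ℂ)
    (h12 : z1 ≠ z2) (h13 : z1 ≠ z3) (h23 : z2 ≠ z3)
    (u1 u2 u3 v1 v2 v3 : ℂ) :
    ((wform z1 z2 u1 u2).im * (wform z2 z3 v2 v3).im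
        - (wform z1 z2 v1 v2).im * (wform z2 z3 u2 u3).im)
      + ((wform z2 z3 u2 u3).im * (wform z3 z1 v3 v1).im
        - (wform z2 z3 v2 v3).im * (wform z3 z1 u3 u1).im)
      + ((wform z3 z1 u3 u1).im * (wform z1 z2 v1 v2).im
        - (wform z3 z1 v3 v1).im * (wform z1 z2 u1 u2).im)
    = ((wform z1 z2 u1 u2).re * (wform z2 z3 v2 v3).re
        - (wform z1 z2 v1 v2).re * (wform z2 z3 u2 u3).re)
      + ((wform z2 z3 u2 u3).re * (wform z3 z1 v3 v1).re
        - (wform z2 z3 v2 v3).re * (wform z3 z1 u3 u1).re)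
      + ((wform z3 z1 u3 u1).re * (wform z1 z2 v1 v2).re
        - (wform z3 z1 v3 v1).re * (wform z1 z2 u1 u2).re) := by
  have arnold := arnold_relation (z := ![z1, z2, z3]) (i := 0) (j := 1) (k := 2) h12 h23 h13.symm
  exact congrFun₂ (wedge_im_add_cyclic_eq_wedge_re_add_cyclic arnold) ![u1, u2, u3] ![v1, v2, v3]
end

section
/- Let a, b, c be real numbers with 0 ≤ a ≤ π/2, 0 ≤ b ≤ π/2, 0 ≤ c ≤ π/2. Then the two-dimensional Lebesgue measure of the region { (x,y) ∈ ℝ² : -a ≤ x ≤ π/2, -b ≤ y ≤ π/2, 0 ≤ x + y ≤ π/2 + c } equals π²/8 + (1/2)·( a·(π - a) + b·(π - b) + c·(π - c) ). -/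
open Real MeasureTheory

/-!
With `s = π / 2`, the constraints `x ≤ s`, `y ≤ s`, `0 ≤ x + y` cut out a right isosceles triangle
with legs `2 * s`. The remaining constraints `-a ≤ x`, `-b ≤ y`, `x + y ≤ s + c` remove from its
three corners right isosceles triangles with legs `s - a`, `s - b`, `s - c`, which are disjoint as
soon as `a + b`, `a + c`, `b + c` are nonnegative. The area is therefore
`(2 * s) ^ 2 / 2 - ((s - a) ^ 2 + (s - b) ^ 2 + (s - c) ^ 2) / 2`.
-/

section

open Set

/-- The points of the plane whose two coordinates and whose coordinate sum lie in prescribed sets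
`I`, `J`, `K`. The triangle, its corners and the region left after cutting them off are all of this
form, with intervals for `I`, `J`, `K`. -/
def coordSumRegion (I J K : Set ℝ) : Set (ℝ × ℝ) :=
  {p | p.1 ∈ I ∧ p.2 ∈ J ∧ p.1 + p.2 ∈ K}

namespace coordSumRegion

theorem measurableSet {I J K : Set ℝ}
    (hI : MeasurableSet I) (hJ : MeasurableSet J) (hK : MeasurableSet K) :
    MeasurableSet (coordSumRegion I J K) :=
  (measurable_fst hI).inter ((measurable_snd hJ).inter (measurable_add hK))

theorem ae_congr {I I' J J' K K' : Set ℝ}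
    (hI : I =ᵐ[volume] I') (hJ : J =ᵐ[volume] J') (hK : K =ᵐ[volume] K') :
    coordSumRegion I J K =ᵐ[volume] coordSumRegion I' J' K' :=
  (Measure.quasiMeasurePreserving_fst.preimage_ae_eq hI).inter
    ((Measure.quasiMeasurePreserving_snd.preimage_ae_eq hJ).inter
      ((quasiMeasurePreserving_add volume volume).preimage_ae_eq hK))

theorem eq_regionBetween (α β γ : ℝ) :
    coordSumRegion (Iio α) (Iio β) (Ioi γ) =
      regionBetween (fun x ↦ γ - x) (fun _ ↦ β) (Ioo (γ - β) α) := by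
  ext p
  simp only [coordSumRegion, regionBetween, mem_ofPred_eq, mem_Iio, mem_Ioi, mem_Ioo]
  grind

theorem volume_triangle {I J K : Set ℝ} {α β γ : ℝ} (hI : I =ᵐ[volume] Iio α)
    (hJ : J =ᵐ[volume] Iio β) (hK : K =ᵐ[volume] Ioi γ) (h : γ ≤ α + β) :
    volume (coordSumRegion I J K) = ENNReal.ofReal ((α + β - γ) ^ 2 / 2) := by
  have integrableOn {f : ℝ → ℝ} (hf : Continuous f) : IntegrableOn f (Ioo (γ - β) α) :=
    hf.integrableOn_Icc.mono_set Ioo_subset_Icc_self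
  have integral_height : ∫ x in Ioo (γ - β) α, (β - (γ - x)) = (α + β - γ) ^ 2 / 2 := by
    rw [← integral_Ioc_eq_integral_Ioo, ← intervalIntegral.integral_of_le (by linarith)]
    simp only [← sub_add, intervalIntegral.integral_comp_add_left (fun x ↦ x), integral_id]
    ring
  calc volume (coordSumRegion I J K)
      = volume (coordSumRegion (Iio α) (Iio β) (Ioi γ)) := measure_congr (ae_congr hI hJ hK)
    _ = ENNReal.ofReal (∫ x in Ioo (γ - β) α, (β - (γ - x))) := by
        rw [eq_regionBetween]
        exact volume_regionBetween_eq_integral (integrableOn (by fun_prop))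
          (integrableOn (by fun_prop)) measurableSet_Ioo fun x hx ↦ by linarith [hx.1]
    _ = ENNReal.ofReal ((α + β - γ) ^ 2 / 2) := by rw [integral_height]

end coordSumRegion

open coordSumRegion

/-- The three corners cut off the triangle `x ≤ s`, `y ≤ s`, `0 ≤ x + y` by the lines `x = -a`,
`y = -b`, `x + y = s + c`. The cutting lines themselves are left out, so that the corners are
exactly what the truncated triangle lacks. -/
def triangleCorners (s a b c : ℝ) : Set (ℝ × ℝ) :=
  coordSumRegion (Iio (-a)) (Iic s) (Ici 0) ∪ coordSumRegion (Iic s) (Iio (-b)) (Ici 0) ∪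
    coordSumRegion (Iic s) (Iic s) (Ioi (s + c))

namespace triangleCorners

variable {s a b c : ℝ}

theorem measurableSet : MeasurableSet (triangleCorners s a b c) :=
  ((coordSumRegion.measurableSet measurableSet_Iio measurableSet_Iic measurableSet_Ici).union
    (coordSumRegion.measurableSet measurableSet_Iic measurableSet_Iio measurableSet_Ici)).union
    (coordSumRegion.measurableSet measurableSet_Iic measurableSet_Iic measurableSet_Ioi)

theorem subset_triangle (ha : -a ≤ s) (hb : -b ≤ s) (hc : 0 ≤ s + c) :
    triangleCorners s a b c ⊆ coordSumRegion (Iic s) (Iic s) (Ici 0) := by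
  rintro p ((⟨hx, hy, hxy⟩ | ⟨hx, hy, hxy⟩) | ⟨hx, hy, hxy⟩)
  · exact ⟨hx.le.trans ha, hy, hxy⟩
  · exact ⟨hx, hy.le.trans hb, hxy⟩
  · exact ⟨hx, hy, hc.trans hxy.le⟩

theorem volume_eq (ha : a ≤ s) (hb : b ≤ s) (hc : c ≤ s)
    (hab : 0 ≤ a + b) (hac : 0 ≤ a + c) (hbc : 0 ≤ b + c) :
    volume (triangleCorners s a b c) =
      ENNReal.ofReal (((s - a) ^ 2 + (s - b) ^ 2 + (s - c) ^ 2) / 2) := by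
  have disjoint_xy : Disjoint (coordSumRegion (Iio (-a)) (Iic s) (Ici 0))
      (coordSumRegion (Iic s) (Iio (-b)) (Ici 0)) :=
    disjoint_left.2 fun p ⟨hx, _, hxy⟩ ⟨_, hy, _⟩ ↦ by
      simp only [mem_Iio, mem_Ici] at hx hy hxy
      linarith
  have disjoint_xy_sum : Disjoint (coordSumRegion (Iio (-a)) (Iic s) (Ici 0) ∪
      coordSumRegion (Iic s) (Iio (-b)) (Ici 0)) (coordSumRegion (Iic s) (Iic s) (Ioi (s + c))) :=
    disjoint_left.2 fun p hp ⟨hx', hy', hxy⟩ ↦ by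
      simp only [mem_Iic, mem_Ioi] at hx' hy' hxy
      rcases hp with ⟨hx, -⟩ | ⟨-, hy, -⟩
      · linarith [mem_Iio.1 hx]
      · linarith [mem_Iio.1 hy]
  have volume_x : volume (coordSumRegion (Iio (-a)) (Iic s) (Ici 0)) =
      ENNReal.ofReal ((s - a) ^ 2 / 2) := by
    rw [volume_triangle .rfl Iio_ae_eq_Iic.symm Ioi_ae_eq_Ici.symm (by linarith)]
    ring_nf
  have volume_y : volume (coordSumRegion (Iic s) (Iio (-b)) (Ici 0)) =
      ENNReal.ofReal ((s - b) ^ 2 / 2) := by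
    rw [volume_triangle Iio_ae_eq_Iic.symm .rfl Ioi_ae_eq_Ici.symm (by linarith)]
    ring_nf
  have volume_sum : volume (coordSumRegion (Iic s) (Iic s) (Ioi (s + c))) =
      ENNReal.ofReal ((s - c) ^ 2 / 2) := by
    rw [volume_triangle Iio_ae_eq_Iic.symm Iio_ae_eq_Iic.symm .rfl (by linarith)]
    ring_nf
  rw [triangleCorners, measure_union disjoint_xy_sum
      (coordSumRegion.measurableSet measurableSet_Iic measurableSet_Iic measurableSet_Ioi),
    measure_union disjoint_xy
      (coordSumRegion.measurableSet measurableSet_Iic measurableSet_Iio measurableSet_Ici),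
    volume_x, volume_y, volume_sum, ← ENNReal.ofReal_add (by positivity) (by positivity),
    ← ENNReal.ofReal_add (by positivity) (by positivity), add_div, add_div]

end triangleCorners

theorem triangle_diff_triangleCorners (s a b c : ℝ) :
    coordSumRegion (Iic s) (Iic s) (Ici 0) \ triangleCorners s a b c =
      {p : ℝ × ℝ | -a ≤ p.1 ∧ p.1 ≤ s ∧ -b ≤ p.2 ∧ p.2 ≤ s
        ∧ 0 ≤ p.1 + p.2 ∧ p.1 + p.2 ≤ s + c} := by
  ext p
  simp only [coordSumRegion, triangleCorners, mem_sdiff, mem_union, mem_ofPred_eq, mem_Iic,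
    mem_Ici, mem_Iio, mem_Ioi]
  grind

theorem area_angle_region_general {s a b c : ℝ} (ha : a ≤ s) (hb : b ≤ s) (hc : c ≤ s)
    (hab : 0 ≤ a + b) (hac : 0 ≤ a + c) (hbc : 0 ≤ b + c) :
    volume {p : ℝ × ℝ | -a ≤ p.1 ∧ p.1 ≤ s ∧ -b ≤ p.2 ∧ p.2 ≤ s
        ∧ 0 ≤ p.1 + p.2 ∧ p.1 + p.2 ≤ s + c} =
      ENNReal.ofReal (s ^ 2 / 2
        + 1 / 2 * (a * (2 * s - a) + b * (2 * s - b) + c * (2 * s - c))) := by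
  have volume_corners := triangleCorners.volume_eq ha hb hc hab hac hbc
  rw [← triangle_diff_triangleCorners,
    measure_sdiff (triangleCorners.subset_triangle (by linarith) (by linarith) (by linarith))
      triangleCorners.measurableSet.nullMeasurableSet (volume_corners ▸ ENNReal.ofReal_ne_top),
    volume_triangle Iio_ae_eq_Iic.symm Iio_ae_eq_Iic.symm Ioi_ae_eq_Ici.symm (by linarith),
    volume_corners, ← ENNReal.ofReal_sub _ (by positivity)]
  ring_nf

end

/-- the Lebesgue area of the region
`{(x,y) : -a ≤ x ≤ π/2, -b ≤ y ≤ π/2, 0 ≤ x + y ≤ π/2 + c}` for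
`a, b, c ∈ [0, π/2]` equals `π²/8 + (1/2)(a(π-a) + b(π-b) + c(π-c))`. -/
theorem area_angle_region (a b c : ℝ)
    (ha0 : 0 ≤ a) (ha : a ≤ π / 2)
    (hb0 : 0 ≤ b) (hb : b ≤ π / 2)
    (hc0 : 0 ≤ c) (hc : c ≤ π / 2) :
    volume {p : ℝ × ℝ | -a ≤ p.1 ∧ p.1 ≤ π / 2 ∧ -b ≤ p.2 ∧ p.2 ≤ π / 2
        ∧ 0 ≤ p.1 + p.2 ∧ p.1 + p.2 ≤ π / 2 + c}
      = ENNReal.ofReal (π ^ 2 / 8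
          + 1 / 2 * (a * (π - a) + b * (π - b) + c * (π - c))) := by
  rw [area_angle_region_general ha hb hc (by positivity) (by positivity) (by positivity)]
  ring_nf
end
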